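/- arXiv:2404.14418 — 3 statements merged into one kernel-verified Lean document; each statement's English description precedes it below -/
import Mathlib

section
/- Assume every vertex of G has at least one neighbor. Then for every initial failure set Θ ⊆ V and every vertex u in the final failed set F(Θ), there exists θ ∈ Θ and a path from u to θ in G all of whose vertices lie in F(Θ); equivalently, in the subgraph of G induced on F(Θ), every vertex lies in the same connected component as some vertex of Θ. -/
/-- One-round threshold cascade: the set of vertices outside `S` whose fraction of
failed neighbors meets or exceeds their threshold. -/
def cascade {V : Type*} (G : SimpleGraph V) (φ : V → ℝ) (S : Set V) : Set V :=
  {v | v ∉ S ∧ φ v * (G.neighborSet v).ncard ≤ ((G.neighborSet v ∩ S).ncard : ℝ)}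

/-- The cascade sequence `Ω_0 = Θ`, `Ω_{t+1} = Ω_t ∪ c(Ω_t)`. -/
def omegaSeq {V : Type*} (G : SimpleGraph V) (φ : V → ℝ) (Θ : Set V) : ℕ → Set V
  | 0 => Θ
  | t + 1 => omegaSeq G φ Θ t ∪ cascade G φ (omegaSeq G φ Θ t)

/-- The final failed set `F(Θ) = ⋃_{t ≥ 0} Ω_t`. -/
def finalSet {V : Type*} (G : SimpleGraph V) (φ : V → ℝ) (Θ : Set V) : Set V :=
  ⋃ t, omegaSeq G φ Θ t

/-!
A positive threshold and a nonempty finite neighborhood force a newly failing vertex to have a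
neighbor that failed in an earlier round. Following such neighbors back through the rounds traces,
inside the final failed set, a walk to an initial failure.
-/

section

variable {V : Type*} {G : SimpleGraph V}

theorem exists_adj_of_mem_cascade {φ : V → ℝ} {S : Set V} {v : V} [Finite (G.neighborSet v)]
    (hφ : 0 < φ v) (hdeg : (G.neighborSet v).Nonempty) (hv : v ∈ cascade G φ S) :
    ∃ w ∈ S, G.Adj v w := by
  have degree_pos : (0 : ℝ) < (G.neighborSet v).ncard := by
    exact_mod_cast hdeg.ncard_pos
  have failed_pos : (0 : ℝ) < (G.neighborSet v ∩ S).ncard :=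
    (mul_pos hφ degree_pos).trans_le hv.2
  obtain ⟨w, hvw, hwS⟩ : (G.neighborSet v ∩ S).Nonempty :=
    Set.nonempty_of_ncard_ne_zero (Nat.cast_pos.1 failed_pos).ne'
  exact ⟨w, hwS, hvw⟩

theorem exists_reachable_induce_iUnion {Ω : ℕ → Set V}
    (hΩ : ∀ t, ∀ v ∈ Ω (t + 1) \ Ω t, ∃ w ∈ Ω t, G.Adj v w) {u : V} (hu : u ∈ ⋃ t, Ω t) :
    ∃ θ ∈ Ω 0, ∃ hθ : θ ∈ ⋃ t, Ω t, (G.induce (⋃ t, Ω t)).Reachable ⟨u, hu⟩ ⟨θ, hθ⟩ := by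
  obtain ⟨t, hut⟩ := Set.mem_iUnion.1 hu
  induction t generalizing u with
  | zero => exact ⟨u, hut, hu, .rfl⟩
  | succ t ih =>
    by_cases hut' : u ∈ Ω t
    · exact ih hu hut'
    · obtain ⟨w, hwt, huw⟩ := hΩ t u ⟨hut, hut'⟩
      have hw : w ∈ ⋃ t, Ω t := Set.mem_iUnion_of_mem t hwt
      obtain ⟨θ, hθ₀, hθ, hwθ⟩ := ih hw hwt
      have huw' : (G.induce (⋃ t, Ω t)).Adj ⟨u, hu⟩ ⟨w, hw⟩ := huw
      exact ⟨θ, hθ₀, hθ, huw'.reachable.trans hwθ⟩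

end

theorem finalSet_reachable_initial_general {V : Type*} (G : SimpleGraph V)
    [∀ v, Finite (G.neighborSet v)] (φ : V → ℝ) (hφ : ∀ v, 0 < φ v)
    (hdeg : ∀ v, (G.neighborSet v).Nonempty)
    (Θ : Set V) (u : V) (hu : u ∈ finalSet G φ Θ) :
    ∃ θ ∈ Θ, ∃ hθ : θ ∈ finalSet G φ Θ,
      (G.induce (finalSet G φ Θ)).Reachable ⟨u, hu⟩ ⟨θ, hθ⟩ := by
  refine exists_reachable_induce_iUnion (Ω := omegaSeq G φ Θ) (fun t v hv => ?_) hu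
  have hvc : v ∈ cascade G φ (omegaSeq G φ Θ t) := hv.1.resolve_left hv.2
  exact exists_adj_of_mem_cascade (hφ v) (hdeg v) hvc

/-- If every vertex has a neighbor, then every vertex `u` of the final failed set is
connected, within the subgraph induced on the final failed set, to some initial
failure `θ ∈ Θ`. -/
theorem finalSet_reachable_initial {V : Type*} [Fintype V] (G : SimpleGraph V)
    (φ : V → ℝ) (hφ : ∀ v, 0 < φ v ∧ φ v ≤ 1)
    (hdeg : ∀ v, (G.neighborSet v).Nonempty)
    (Θ : Set V) (u : V) (hu : u ∈ finalSet G φ Θ) :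
    ∃ θ ∈ Θ, ∃ hθ : θ ∈ finalSet G φ Θ,
      (G.induce (finalSet G φ Θ)).Reachable ⟨u, hu⟩ ⟨θ, hθ⟩ :=
  finalSet_reachable_initial_general G φ (fun v => (hφ v).1) hdeg Θ u hu
end

section
/- Correctness of counterfactual validation for the threshold cascade: let v, w ∈ V and set Ω̂ = F({v}) ∪ F({w}). If the counterfactual validity condition c(Ω̂) = ∅ holds, then Ω̂ equals the true final failed set of the combined attack, i.e. F({v, w}) = F({v}) ∪ F({w}). -/
section FinalSet

variable {V : Type*} (G : SimpleGraph V) (φ : V → ℝ)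

theorem subset_finalSet (Θ : Set V) : Θ ⊆ finalSet G φ Θ :=
  Set.subset_iUnion (omegaSeq G φ Θ) 0

theorem omegaSeq_eq_self {S : Set V} (hS : cascade G φ S = ∅) (t : ℕ) :
    omegaSeq G φ S t = S := by
  induction t with
  | zero => rfl
  | succ t ih => rw [omegaSeq, ih, hS, Set.union_empty]

theorem finalSet_eq_self {S : Set V} (hS : cascade G φ S = ∅) : finalSet G φ S = S := by
  simp only [finalSet, omegaSeq_eq_self G φ hS, Set.iUnion_const]

variable [∀ v, Finite (G.neighborSet v)]

-- `cascade G φ` is not itself monotone: a vertex leaves it by joining the failed set.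
theorem monotone_union_cascade : Monotone fun S : Set V ↦ S ∪ cascade G φ S := by
  intro S T hST
  refine Set.union_subset (hST.trans Set.subset_union_left) fun v hv ↦ ?_
  by_cases hvT : v ∈ T
  · exact Or.inl hvT
  · have failed_neighbors_le :
        (G.neighborSet v ∩ S).ncard ≤ (G.neighborSet v ∩ T).ncard :=
      Set.ncard_le_ncard (Set.inter_subset_inter_right _ hST)
    exact Or.inr ⟨hvT, hv.2.trans (Nat.cast_le.2 failed_neighbors_le)⟩

theorem omegaSeq_mono (t : ℕ) : Monotone fun Θ : Set V ↦ omegaSeq G φ Θ t := by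
  induction t with
  | zero => exact monotone_id
  | succ t ih => exact (monotone_union_cascade G φ).comp ih

theorem finalSet_mono : Monotone (finalSet G φ) :=
  fun _ _ h ↦ Set.iUnion_mono fun t ↦ omegaSeq_mono G φ t h

end FinalSet

theorem counterfactual_valid_general {V : Type*} (G : SimpleGraph V)
    [∀ v, Finite (G.neighborSet v)] (φ : V → ℝ) {ι : Sort*} (Θ : ι → Set V)
    (hval : cascade G φ (⋃ i, finalSet G φ (Θ i)) = ∅) :
    finalSet G φ (⋃ i, Θ i) = ⋃ i, finalSet G φ (Θ i) := by
  apply Set.Subset.antisymm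
  · calc finalSet G φ (⋃ i, Θ i)
      _ ⊆ finalSet G φ (⋃ i, finalSet G φ (Θ i)) :=
        finalSet_mono G φ (Set.iUnion_mono fun i ↦ subset_finalSet G φ (Θ i))
      _ = ⋃ i, finalSet G φ (Θ i) := finalSet_eq_self G φ hval
  · exact (finalSet_mono G φ).le_map_iSup

/-- Correctness of counterfactual validation for the threshold cascade: if
`Ω̂ = F({v}) ∪ F({w})` satisfies `c(Ω̂) = ∅`, then `F({v,w}) = F({v}) ∪ F({w})`. -/
theorem counterfactual_valid {V : Type*} [Fintype V] (G : SimpleGraph V)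
    (φ : V → ℝ) (hφ : ∀ v, 0 < φ v ∧ φ v ≤ 1) (v w : V)
    (hval : cascade G φ (finalSet G φ {v} ∪ finalSet G φ {w}) = ∅) :
    finalSet G φ {v, w} = finalSet G φ {v} ∪ finalSet G φ {w} := by
  simpa only [Set.iUnion_coe_set, Set.biUnion_pair, Set.singleton_union, hval, forall_const]
    using counterfactual_valid_general G φ fun x : ({v, w} : Set V) ↦ {x.1}
end

section
/- Upper bound on load gain from a set of failures (the paper's inequality (8), generalized to a set): for every S ⊆ V and every vertex w ∉ S, the load gained by w when S is deleted is at most the total load carried by S in the original graph, i.e. ℓ_{G−S}(w) − ℓ_G(w) ≤ Σ_{z∈S} ℓ_G(z). In particular, no vertex can gain more load from the failure of a single vertex v than the load ℓ_G(v) that v carried. -/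
/-- `n` is interior to the ordered pair `(s, t)` in `H`: `s ≠ t`, `n` is distinct from
both endpoints, and `n` lies on some shortest `s`–`t` path in `H`. -/
def IsInterior {W : Type*} (H : SimpleGraph W) (n s t : W) : Prop :=
  s ≠ t ∧ n ≠ s ∧ n ≠ t ∧
    ∃ p : H.Walk s t, p.IsPath ∧ p.length = H.dist s t ∧ n ∈ p.support

/-- The load of `n` in `H`: the number of ordered pairs `(s, t)` of vertices such that
`n` is interior to `(s, t)` in `H`. -/
noncomputable def load {W : Type*} (H : SimpleGraph W) (n : W) : ℕ :=
  {p : W × W | IsInterior H n p.1 p.2}.ncard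

/-!
Suppose `w` is interior to `(u, v)` once `S` is deleted, and take a shortest `u`–`v` path of the
original graph. If it meets `S`, then `(u, v)` counts towards the load of a vertex of `S`.
Otherwise it survives the deletion, so the distance from `u` to `v` has not changed and the
shortest path through `w` was already shortest in the original graph. Hence every pair counted by
the new load of `w` is counted by the old load of `w` or by the load of some vertex of `S`.
-/

section

variable {V W : Type*} {G : SimpleGraph V}

theorem dist_induce_le_length {s : Set V} {u v : s} (q : G.Walk u v)
    (hq : ∀ x ∈ q.support, x ∈ s) : (G.induce s).dist u v ≤ q.length :=
  calc (G.induce s).dist u v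
    _ ≤ (q.induce s hq).length := SimpleGraph.dist_le _
    _ = ((q.induce s hq).map (SimpleGraph.Embedding.induce s).toHom).length :=
      (SimpleGraph.Walk.length_map _ _).symm
    _ = q.length := congrArg SimpleGraph.Walk.length (q.map_induce hq)

theorem IsInterior.map {H : SimpleGraph W} {n u v : W} (h : IsInterior H n u v) (f : H →g G)
    (hf : Function.Injective f) (hdist : H.dist u v ≤ G.dist (f u) (f v)) :
    IsInterior G (f n) (f u) (f v) := by
  obtain ⟨huv, hnu, hnv, p, -, hp, hn⟩ := h
  have hlength : (p.map f).length = G.dist (f u) (f v) := by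
    refine le_antisymm ?_ (SimpleGraph.dist_le _)
    rwa [SimpleGraph.Walk.length_map, hp]
  refine ⟨hf.ne huv, hf.ne hnu, hf.ne hnv, p.map f,
    (p.map f).isPath_of_length_eq_dist hlength, hlength, ?_⟩
  rw [SimpleGraph.Walk.support_map]
  exact List.mem_map_of_mem hn

theorem IsInterior.of_induce {s : Set V} {n u v : s} (h : IsInterior (G.induce s) n u v) :
    IsInterior G n u v ∨ ∃ z ∉ s, IsInterior G z u v := by
  let ι : G.induce s →g G := (SimpleGraph.Embedding.induce s).toHom
  have ⟨huv, _, _, p, _⟩ := h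
  obtain ⟨q, hq_path, hq⟩ := (p.map ι).reachable.exists_path_of_dist
  by_cases hqs : ∀ x ∈ q.support, x ∈ s
  · exact .inl (h.map ι Subtype.val_injective (hq ▸ dist_induce_le_length q hqs))
  · push Not at hqs
    obtain ⟨z, hzq, hzs⟩ := hqs
    exact .inr ⟨z, hzs, Subtype.coe_ne_coe.2 huv, (ne_of_mem_of_not_mem u.2 hzs).symm,
      (ne_of_mem_of_not_mem v.2 hzs).symm, q, hq_path, hq, hzq⟩

/-- The ordered pairs to which `n` is interior in `H`. The load of `n` is the `Set.ncard` of this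
set, hence `0` when the set is infinite. -/
def interiorPairs (H : SimpleGraph W) (n : W) : Set (W × W) :=
  {p | IsInterior H n p.1 p.2}

theorem mapsTo_interiorPairs_induce_compl {S : Set V} (w : (Sᶜ : Set V)) :
    Set.MapsTo (Prod.map Subtype.val Subtype.val) (interiorPairs (G.induce Sᶜ) w)
      (interiorPairs G w ∪ ⋃ z ∈ S, interiorPairs G z) := by
  intro p hp
  obtain hw | ⟨z, hz, hz_int⟩ := IsInterior.of_induce hp
  · exact .inl hw
  · exact .inr (Set.mem_biUnion (Set.notMem_compl_iff.1 hz) hz_int)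

theorem load_gain_le_total_load_general (G : SimpleGraph V) (S : Finset V) (w : V) (hw : w ∉ S)
    (hw_fin : (interiorPairs G w).Finite) (hS_fin : ∀ z ∈ S, (interiorPairs G z).Finite) :
    (load (G.induce (↑S : Set V)ᶜ) ⟨w, hw⟩ : ℤ) - load G w ≤ ∑ z ∈ S, (load G z : ℤ) := by
  have hfin : (interiorPairs G w ∪ ⋃ z ∈ S, interiorPairs G z).Finite :=
    hw_fin.union (S.finite_toSet.biUnion hS_fin)
  have hload : load (G.induce (↑S : Set V)ᶜ) ⟨w, hw⟩ ≤ load G w + ∑ z ∈ S, load G z :=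
    calc load (G.induce (↑S : Set V)ᶜ) ⟨w, hw⟩
      _ ≤ (interiorPairs G w ∪ ⋃ z ∈ S, interiorPairs G z).ncard :=
        Set.ncard_le_ncard_of_injOn _ (mapsTo_interiorPairs_induce_compl _)
          (Subtype.val_injective.prodMap Subtype.val_injective).injOn hfin
      _ ≤ load G w + (⋃ z ∈ S, interiorPairs G z).ncard := Set.ncard_union_le _ _
      _ ≤ load G w + ∑ z ∈ S, load G z :=
        Nat.add_le_add_left (S.set_ncard_biUnion_le _) _
  rw [sub_le_iff_le_add']
  exact_mod_cast hload

end

/-- Upper bound on load gain from a set of failures (inequality (8), generalized):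
for every `S ⊆ V` and `w ∉ S`, the load gained by `w` when `S` is deleted is at most
the total load carried by the vertices of `S` in the original graph. -/
theorem load_gain_le_total_load {V : Type*} [Fintype V] [DecidableEq V]
    (G : SimpleGraph V) (S : Finset V) (w : V) (hw : w ∉ S) :
    (load (G.induce (↑S : Set V)ᶜ) ⟨w, hw⟩ : ℤ) - load G w ≤
      ∑ z ∈ S, (load G z : ℤ) :=
  load_gain_le_total_load_general G S w hw (Set.toFinite _) fun _ _ => Set.toFinite _
end
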